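/- arXiv:1210.6064 — 2 statements merged into one kernel-verified Lean document; each statement's English description precedes it below -/
import Mathlib

section
/- Let σ : [0,∞) → ℝ be continuous. Then lim_{t→∞} ∫_0^t e^{−2(t−s)} σ(s)² ds = 0 if and only if lim_{t→∞} ∫_t^{t+1} σ(s)² ds = 0. -/
open MeasureTheory Filter Set

/-!
Write `D a t = ∫ₐᵗ e^{-c (t - s)} f(s) dμ(s)` with `f ≥ 0`. On a window of length `h` the weight
lies between `e^{-c h}` and `1`, so there `D` and the plain integral are comparable; as
`D t (t + h)` is a part of `D a (t + h)`, the windows vanish when `D` does. Conversely,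
`D a t = e^{-c (t - T)} D a T + D T t`: the first term decays, and if all windows beyond `T` carry
mass at most `b`, cutting `[T, t]` into windows bounds the second by `b ∑ₙ e^{-c h n}`.
-/

open Topology

theorem forall_ge_of_forall_mem_Ico_of_forall_add {G : Type*} [AddCommGroup G] [LinearOrder G]
    [IsOrderedAddMonoid G] [Archimedean G] {P : G → Prop} {a h : G} (hh : 0 < h)
    (base : ∀ t ∈ Ico a (a + h), P t) (step : ∀ t, a ≤ t → P t → P (t + h)) :
    ∀ t, a ≤ t → P t := by
  have of_le_nsmul (n : ℕ) : ∀ t, a ≤ t → t - a ≤ n • h → P t := by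
    induction n with
    | zero =>
      intro t hat ht
      rw [zero_nsmul, sub_nonpos] at ht
      exact base t ⟨hat, ht.trans_lt (lt_add_of_pos_right a hh)⟩
    | succ n ih =>
      intro t hat ht
      rcases lt_or_ge t (a + h) with hth | hth
      · exact base t ⟨hat, hth⟩
      · have hat' : a ≤ t - h := le_sub_iff_add_le.2 hth
        have ht' : t - h - a ≤ n • h := by
          rwa [sub_right_comm, sub_le_iff_le_add, ← succ_nsmul]
        simpa only [sub_add_cancel] using step (t - h) hat' (ih _ hat' ht')
  intro t hat
  obtain ⟨n, hn⟩ := Archimedean.arch (t - a) hh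
  exact of_le_nsmul n t hat hn

/-- The exponentially discounted integral of `f` over `(a, t]`, in which the mass at `s` is weighted
by `e^{-c (t - s)}`. The lower endpoint is a parameter so that the contributions of the past and of
a recent window can be separated. -/
noncomputable def discountedIntegral (μ : Measure ℝ) (c : ℝ) (f : ℝ → ℝ) (a t : ℝ) : ℝ :=
  ∫ s in a..t, Real.exp (-(c * (t - s))) * f s ∂μ

section DiscountedIntegral

variable {μ : Measure ℝ} {f : ℝ → ℝ} {a b c h t u : ℝ}

theorem intervalIntegrable_of_locallyIntegrableOn_Ici (hf : LocallyIntegrableOn f (Ici a) μ)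
    (hat : a ≤ t) (htu : t ≤ u) : IntervalIntegrable f μ t u := by
  rw [intervalIntegrable_iff_integrableOn_Ioc_of_le htu]
  exact (hf.integrableOn_compact_subset (Icc_subset_Ici_self.trans (Ici_subset_Ici.2 hat))
    isCompact_Icc).mono_set Ioc_subset_Icc_self

theorem intervalIntegrable_exp_mul (hf : IntervalIntegrable f μ a b) (c t : ℝ) :
    IntervalIntegrable (fun s => Real.exp (-(c * (t - s))) * f s) μ a b :=
  hf.continuousOn_mul (Continuous.continuousOn (by fun_prop))

theorem discountedIntegral_nonneg (c : ℝ) (hat : a ≤ t) (hf₀ : ∀ s ∈ Icc a t, 0 ≤ f s) :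
    0 ≤ discountedIntegral μ c f a t :=
  intervalIntegral.integral_nonneg hat fun s hs => mul_nonneg (Real.exp_pos _).le (hf₀ s hs)

theorem discountedIntegral_eq_exp_mul_add (c : ℝ) (hat : IntervalIntegrable f μ a t)
    (htu : IntervalIntegrable f μ t u) :
    discountedIntegral μ c f a u =
      Real.exp (-(c * (u - t))) * discountedIntegral μ c f a t +
        discountedIntegral μ c f t u := by
  have weight_mul (s : ℝ) : Real.exp (-(c * (u - s))) * f s =
      Real.exp (-(c * (u - t))) * (Real.exp (-(c * (t - s))) * f s) := by
    rw [← mul_assoc, ← Real.exp_add]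
    ring_nf
  unfold discountedIntegral
  rw [← intervalIntegral.integral_add_adjacent_intervals (intervalIntegrable_exp_mul hat c u)
    (intervalIntegrable_exp_mul htu c u), ← intervalIntegral.integral_const_mul]
  simp only [← weight_mul]

theorem discountedIntegral_le_integral (hc : 0 ≤ c) (hat : a ≤ t) (htu : t ≤ u)
    (hf : IntervalIntegrable f μ a u) (hf₀ : ∀ s ∈ Icc a u, 0 ≤ f s) :
    discountedIntegral μ c f a t ≤ ∫ s in a..u, f s ∂μ := by
  have hf_at : IntervalIntegrable f μ a t := hf.mono_set <| by
    rw [uIcc_of_le hat, uIcc_of_le (hat.trans htu)]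
    exact Icc_subset_Icc_right htu
  calc discountedIntegral μ c f a t
      ≤ ∫ s in a..t, f s ∂μ := by
        refine intervalIntegral.integral_mono_on hat (intervalIntegrable_exp_mul hf_at c t) hf_at
          fun s hs => mul_le_of_le_one_left (hf₀ s ⟨hs.1, hs.2.trans htu⟩)
            (Real.exp_le_one_iff.2 ?_)
        exact neg_nonpos.2 (mul_nonneg hc (sub_nonneg.2 hs.2))
    _ ≤ ∫ s in a..u, f s ∂μ :=
        intervalIntegral.integral_mono_interval le_rfl hat htu
          ((ae_restrict_mem measurableSet_Ioc).mono fun s hs => hf₀ s (Ioc_subset_Icc_self hs)) hf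

theorem integral_le_exp_mul_discountedIntegral (hc : 0 ≤ c) (hat : a ≤ t)
    (hf : IntervalIntegrable f μ a t) (hf₀ : ∀ s ∈ Icc a t, 0 ≤ f s) :
    ∫ s in a..t, f s ∂μ ≤ Real.exp (c * (t - a)) * discountedIntegral μ c f a t := by
  unfold discountedIntegral
  rw [← intervalIntegral.integral_const_mul]
  refine intervalIntegral.integral_mono_on hat hf
    ((intervalIntegrable_exp_mul hf c t).const_mul _) fun s hs => ?_
  rw [← mul_assoc, ← Real.exp_add]
  refine le_mul_of_one_le_left (hf₀ s hs) (Real.one_le_exp ?_)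
  linarith [mul_nonneg hc (sub_nonneg.2 hs.1)]

theorem discountedIntegral_le_div_of_forall_integral_le (hc : 0 < c) (hh : 0 < h)
    (hf : LocallyIntegrableOn f (Ici a) μ) (hf₀ : ∀ s ∈ Ici a, 0 ≤ f s)
    (hb : ∀ t, a ≤ t → ∫ s in t..(t + h), f s ∂μ ≤ b) (hat : a ≤ t) :
    discountedIntegral μ c f a t ≤ b / (1 - Real.exp (-(c * h))) := by
  set r := Real.exp (-(c * h))
  have hr₀ : 0 < r := Real.exp_pos _
  have hr₁ : 0 < 1 - r := sub_pos.2 (Real.exp_lt_one_iff.2 (neg_neg_of_pos (mul_pos hc hh)))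
  have hint {v w : ℝ} (hv : a ≤ v) (hvw : v ≤ w) : IntervalIntegrable f μ v w :=
    intervalIntegrable_of_locallyIntegrableOn_Ici hf hv hvw
  have window_le {v w : ℝ} (hv : a ≤ v) (hvw : v ≤ w) (hw : w ≤ v + h) :
      discountedIntegral μ c f v w ≤ b :=
    (discountedIntegral_le_integral hc.le hvw hw (hint hv (hvw.trans hw))
      fun s hs => hf₀ s (hv.trans hs.1)).trans (hb v hv)
  have hb₀ : 0 ≤ b := (discountedIntegral_nonneg c le_rfl fun s hs => hf₀ s hs.1).trans
    (window_le le_rfl le_rfl (le_add_of_nonneg_right hh.le))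
  refine forall_ge_of_forall_mem_Ico_of_forall_add
    (P := fun v => discountedIntegral μ c f a v ≤ b / (1 - r)) hh ?_ ?_ t hat
  · intro v hv
    exact (window_le le_rfl hv.1 hv.2.le).trans (le_div_self hb₀ hr₁ (by linarith))
  · intro v hav ih
    have hvh : v ≤ v + h := le_add_of_nonneg_right hh.le
    calc discountedIntegral μ c f a (v + h)
        = r * discountedIntegral μ c f a v + discountedIntegral μ c f v (v + h) := by
          rw [discountedIntegral_eq_exp_mul_add c (hint le_rfl hav) (hint hav hvh),
            add_sub_cancel_left]
      _ ≤ r * (b / (1 - r)) + b :=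
          add_le_add (mul_le_mul_of_nonneg_left ih hr₀.le) (window_le hav hvh le_rfl)
      _ = b / (1 - r) := by
          field_simp
          ring

theorem tendsto_integral_add_of_tendsto_discountedIntegral (hc : 0 ≤ c) (hh : 0 ≤ h)
    (hf : LocallyIntegrableOn f (Ici a) μ) (hf₀ : ∀ s ∈ Ici a, 0 ≤ f s)
    (hD : Tendsto (discountedIntegral μ c f a) atTop (𝓝 0)) :
    Tendsto (fun t => ∫ s in t..(t + h), f s ∂μ) atTop (𝓝 0) := by
  have hD_shift : Tendsto (fun t => Real.exp (c * h) * discountedIntegral μ c f a (t + h))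
      atTop (𝓝 0) := by
    simpa only [mul_zero, Function.comp_def, id] using
      (hD.comp (tendsto_atTop_add_const_right atTop h tendsto_id)).const_mul (Real.exp (c * h))
  have window_nonneg {t : ℝ} (hat : a ≤ t) : ∀ s ∈ Icc t (t + h), 0 ≤ f s :=
    fun s hs => hf₀ s (hat.trans hs.1)
  refine squeeze_zero' ?_ ?_ hD_shift
  · filter_upwards [eventually_ge_atTop a] with t hat
    exact intervalIntegral.integral_nonneg (by linarith) (window_nonneg hat)
  · filter_upwards [eventually_ge_atTop a] with t hat
    have hth : t ≤ t + h := by linarith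
    have hint_past := intervalIntegrable_of_locallyIntegrableOn_Ici hf le_rfl hat
    have hint_window := intervalIntegrable_of_locallyIntegrableOn_Ici hf hat hth
    calc ∫ s in t..(t + h), f s ∂μ
        ≤ Real.exp (c * h) * discountedIntegral μ c f t (t + h) := by
          simpa only [add_sub_cancel_left] using
            integral_le_exp_mul_discountedIntegral hc hth hint_window (window_nonneg hat)
      _ ≤ Real.exp (c * h) * discountedIntegral μ c f a (t + h) := by
          rw [discountedIntegral_eq_exp_mul_add c hint_past hint_window]
          refine mul_le_mul_of_nonneg_left (le_add_of_nonneg_left ?_) (Real.exp_pos _).le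
          exact mul_nonneg (Real.exp_pos _).le
            (discountedIntegral_nonneg c hat fun s hs => hf₀ s hs.1)

theorem tendsto_discountedIntegral_of_tendsto_integral_add (hc : 0 < c) (hh : 0 < h)
    (hf : LocallyIntegrableOn f (Ici a) μ) (hf₀ : ∀ s ∈ Ici a, 0 ≤ f s)
    (hI : Tendsto (fun t => ∫ s in t..(t + h), f s ∂μ) atTop (𝓝 0)) :
    Tendsto (discountedIntegral μ c f a) atTop (𝓝 0) := by
  refine tendsto_order.2 ⟨fun ε hε => ?_, fun ε hε => ?_⟩
  · filter_upwards [eventually_ge_atTop a] with t hat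
    exact hε.trans_le (discountedIntegral_nonneg c hat fun s hs => hf₀ s hs.1)
  have hr : 0 < 1 - Real.exp (-(c * h)) :=
    sub_pos.2 (Real.exp_lt_one_iff.2 (neg_neg_of_pos (mul_pos hc hh)))
  obtain ⟨T, haT, hT⟩ : ∃ T, a ≤ T ∧ ∀ t, T ≤ t →
      ∫ s in t..(t + h), f s ∂μ ≤ ε / 2 * (1 - Real.exp (-(c * h))) :=
    ((eventually_ge_atTop a).and (eventually_forall_ge_atTop.2
      (hI.eventually_le_const (mul_pos (half_pos hε) hr)))).exists
  have past_tendsto : Tendsto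
      (fun t => Real.exp (-(c * (t - T))) * discountedIntegral μ c f a T) atTop (𝓝 0) := by
    have : Tendsto (fun t => c * (t - T)) atTop atTop :=
      (tendsto_atTop_add_const_right atTop (-T) tendsto_id).const_mul_atTop hc
    simpa only [zero_mul, Function.comp_def] using
      (Real.tendsto_exp_neg_atTop_nhds_zero.comp this).mul_const _
  filter_upwards [eventually_ge_atTop T, past_tendsto.eventually_lt_const (half_pos hε)]
    with t hTt past_lt
  have recent_le : discountedIntegral μ c f T t ≤ ε / 2 := by
    simpa only [mul_div_cancel_right₀ _ hr.ne'] using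
      discountedIntegral_le_div_of_forall_integral_le hc hh
        (hf.mono_set (Ici_subset_Ici.2 haT)) (fun s hs => hf₀ s (haT.trans hs)) hT hTt
  rw [discountedIntegral_eq_exp_mul_add c
    (intervalIntegrable_of_locallyIntegrableOn_Ici hf le_rfl haT)
    (intervalIntegrable_of_locallyIntegrableOn_Ici hf haT hTt)]
  linarith

end DiscountedIntegral

theorem stmt4_general {μ : Measure ℝ} {f : ℝ → ℝ} {a c h : ℝ} (hc : 0 < c) (hh : 0 < h)
    (hf : LocallyIntegrableOn f (Ici a) μ) (hf₀ : ∀ s ∈ Ici a, 0 ≤ f s) :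
    Tendsto (fun t => ∫ s in a..t, Real.exp (-(c * (t - s))) * f s ∂μ) atTop (𝓝 0) ↔
      Tendsto (fun t => ∫ s in t..(t + h), f s ∂μ) atTop (𝓝 0) :=
  ⟨tendsto_integral_add_of_tendsto_discountedIntegral hc.le hh.le hf hf₀,
    tendsto_discountedIntegral_of_tendsto_integral_add hc hh hf hf₀⟩

/-- For continuous `σ : [0,∞) → ℝ`, `∫_0^t e^{−2(t−s)} σ(s)² ds → 0` as `t → ∞`
if and only if `∫_t^{t+1} σ(s)² ds → 0` as `t → ∞`. -/
theorem stmt4 (σ : ℝ → ℝ) (hσ : ContinuousOn σ (Set.Ici (0 : ℝ))) :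
    Tendsto (fun t : ℝ => ∫ s in (0 : ℝ)..t, Real.exp (-(2 * (t - s))) * σ s ^ 2)
      atTop (nhds 0)
    ↔
    Tendsto (fun t : ℝ => ∫ s in t..(t + 1), σ s ^ 2) atTop (nhds 0) :=
  stmt4_general two_pos one_pos ((hσ.pow 2).locallyIntegrableOn measurableSet_Ici)
    fun s _ => sq_nonneg (σ s)
end

section
/- Let σ : [0,∞) → ℝ be continuous and suppose that (log t) · ∫_t^{t+1} σ(s)² ds converges as t → ∞ to a limit L ∈ (0, ∞] (i.e. L is strictly positive, possibly +∞). Then liminf_{t→∞} (log t) · ∫_0^t e^{−2(t−s)} σ(s)² ds > 0 (the liminf belongs to (0, ∞]). -/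
open MeasureTheory Filter Set

/-!
Only the window `[t - h, t]` matters: there the kernel `s ↦ k (t - s)` is bounded below by a
positive constant, the rest of the integral is nonnegative, and passing from the weight
`w (t - h)` of that window to `w t` only helps because `w` is monotone.
-/

theorem lt_liminf_coe_iff {α : Type*} {l : Filter α} {u : α → ℝ} {a : EReal} :
    a < liminf (fun x => (u x : EReal)) l ↔ ∃ c : ℝ, a < c ∧ ∀ᶠ x in l, c ≤ u x := by
  constructor
  · intro ha
    obtain ⟨c, hac, hc⟩ := EReal.lt_iff_exists_real_btwn.1 ha
    exact ⟨c, hac, (eventually_lt_of_lt_liminf hc).mono fun _ hx => EReal.coe_le_coe_iff.1 hx.le⟩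
  · rintro ⟨c, hac, hc⟩
    exact hac.trans_le (le_liminf_of_le (h := hc.mono fun _ hx => EReal.coe_le_coe_iff.2 hx))

section CausalKernel

variable {f k : ℝ → ℝ}

theorem intervalIntegrable_comp_sub_mul {a b t : ℝ} (hf : LocallyIntegrableOn f (Ici 0))
    (hk : ContinuousOn k (Ici 0)) (ha : a ∈ Icc 0 t) (hb : b ∈ Icc 0 t) :
    IntervalIntegrable (fun s => k (t - s) * f s) volume a b := by
  have hsub : uIcc a b ⊆ Icc 0 t := ordConnected_Icc.uIcc_subset ha hb
  have hf_int : IntervalIntegrable f volume a b :=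
    (hf.integrableOn_compact_subset (hsub.trans Icc_subset_Ici_self)
      isCompact_uIcc).intervalIntegrable
  exact hf_int.continuousOn_mul
    (hk.comp (by fun_prop) fun s hs => mem_Ici.2 (sub_nonneg.2 (hsub hs).2))

theorem mul_integral_le_integral_comp_sub_mul {δ h t : ℝ} (hf : LocallyIntegrableOn f (Ici 0))
    (hf_nonneg : ∀ s, 0 ≤ s → 0 ≤ f s) (hk : ContinuousOn k (Ici 0))
    (hk_nonneg : ∀ x, 0 ≤ x → 0 ≤ k x) (hδ : ∀ x ∈ Icc 0 h, δ ≤ k x)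
    (hh : 0 ≤ h) (hht : h ≤ t) :
    δ * ∫ s in (t - h)..t, f s ≤ ∫ s in (0 : ℝ)..t, k (t - s) * f s := by
  have h_zero : (0 : ℝ) ∈ Icc 0 t := ⟨le_rfl, hh.trans hht⟩
  have h_start : t - h ∈ Icc 0 t := ⟨sub_nonneg.2 hht, sub_le_self t hh⟩
  have h_end : t ∈ Icc 0 t := ⟨hh.trans hht, le_rfl⟩
  have h_int_f : IntervalIntegrable f volume (t - h) t := by
    simpa only [one_mul] using
      intervalIntegrable_comp_sub_mul (k := fun _ => 1) hf continuousOn_const h_start h_end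
  have h_past : 0 ≤ ∫ s in (0 : ℝ)..(t - h), k (t - s) * f s :=
    intervalIntegral.integral_nonneg h_start.1 fun s hs =>
      mul_nonneg (hk_nonneg _ (sub_nonneg.2 (hs.2.trans h_start.2))) (hf_nonneg s hs.1)
  have h_window : ∫ s in (t - h)..t, δ * f s ≤ ∫ s in (t - h)..t, k (t - s) * f s :=
    intervalIntegral.integral_mono_on h_start.2 (h_int_f.const_mul δ)
      (intervalIntegrable_comp_sub_mul hf hk h_start h_end) fun s hs =>
        mul_le_mul_of_nonneg_right (hδ _ ⟨sub_nonneg.2 hs.2, sub_le_comm.1 hs.1⟩)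
          (hf_nonneg s (h_start.1.trans hs.1))
  calc δ * ∫ s in (t - h)..t, f s
      = ∫ s in (t - h)..t, δ * f s := (intervalIntegral.integral_const_mul δ f).symm
    _ ≤ (∫ s in (0 : ℝ)..(t - h), k (t - s) * f s) + ∫ s in (t - h)..t, k (t - s) * f s :=
        h_window.trans (le_add_of_nonneg_left h_past)
    _ = ∫ s in (0 : ℝ)..t, k (t - s) * f s :=
        intervalIntegral.integral_add_adjacent_intervals
          (intervalIntegrable_comp_sub_mul hf hk h_zero h_start)
          (intervalIntegrable_comp_sub_mul hf hk h_start h_end)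

end CausalKernel

theorem stmt5_general {f k w : ℝ → ℝ} {h T : ℝ} (hh : 0 ≤ h)
    (hf : LocallyIntegrableOn f (Ici 0))
    (hf_nonneg : ∀ s, 0 ≤ s → 0 ≤ f s) (hk : ContinuousOn k (Ici 0))
    (hk_nonneg : ∀ x, 0 ≤ x → 0 ≤ k x) (hk_pos : ∀ x ∈ Icc 0 h, 0 < k x)
    (hw : MonotoneOn w (Ioi T))
    (hlim : 0 < liminf (fun t : ℝ => ((w t * ∫ s in t..(t + h), f s : ℝ) : EReal)) atTop) :
    0 < liminf (fun t : ℝ => ((w t * ∫ s in (0 : ℝ)..t, k (t - s) * f s : ℝ) : EReal)) atTop := by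
  obtain ⟨δ, hδ_pos, hδ⟩ :=
    isCompact_Icc.exists_forall_le' (hk.mono Icc_subset_Ici_self) hk_pos
  obtain ⟨c, hc_pos, hc⟩ := lt_liminf_coe_iff.1 hlim
  rw [EReal.coe_pos] at hc_pos
  refine lt_liminf_coe_iff.2 ⟨δ * c, EReal.coe_pos.2 (mul_pos hδ_pos hc_pos), ?_⟩
  have hc_shift := (tendsto_atTop_add_const_right atTop (-h) tendsto_id).eventually hc
  filter_upwards [hc_shift, eventually_ge_atTop h, eventually_gt_atTop (T + h)]
    with t hct hht hTt
  simp only [id_eq, ← sub_eq_add_neg, sub_add_cancel] at hct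
  have h_integral : 0 ≤ ∫ s in (t - h)..t, f s :=
    intervalIntegral.integral_nonneg (sub_le_self t hh) fun s hs =>
      hf_nonneg s ((sub_nonneg.2 hht).trans hs.1)
  have hw_le : w (t - h) ≤ w t :=
    hw (mem_Ioi.2 (by linarith)) (mem_Ioi.2 (by linarith)) (sub_le_self t hh)
  have hc_le : c ≤ w t * ∫ s in (t - h)..t, f s :=
    hct.trans (mul_le_mul_of_nonneg_right hw_le h_integral)
  have hw_pos : 0 < w t := pos_of_mul_pos_left (hc_pos.trans_le hc_le) h_integral
  calc δ * c ≤ δ * (w t * ∫ s in (t - h)..t, f s) := mul_le_mul_of_nonneg_left hc_le hδ_pos.le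
    _ = w t * (δ * ∫ s in (t - h)..t, f s) := mul_left_comm _ _ _
    _ ≤ w t * ∫ s in (0 : ℝ)..t, k (t - s) * f s :=
        mul_le_mul_of_nonneg_left
          (mul_integral_le_integral_comp_sub_mul hf hf_nonneg hk hk_nonneg hδ hh hht) hw_pos.le

/-- If `σ : [0,∞) → ℝ` is continuous and `(log t) · ∫_t^{t+1} σ(s)² ds` converges as
`t → ∞` to a limit `L ∈ (0, ∞]` (in the extended reals), then
`liminf_{t→∞} (log t) · ∫_0^t e^{−2(t−s)} σ(s)² ds > 0` (as an extended real, i.e.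
the liminf lies in `(0, ∞]`). -/
theorem stmt5 (σ : ℝ → ℝ) (hσ : ContinuousOn σ (Set.Ici (0 : ℝ)))
    (L : EReal) (hL : 0 < L)
    (hlim : Tendsto
      (fun t : ℝ => ((Real.log t * ∫ s in t..(t + 1), σ s ^ 2 : ℝ) : EReal))
      atTop (nhds L)) :
    0 < liminf
      (fun t : ℝ =>
        ((Real.log t * ∫ s in (0 : ℝ)..t, Real.exp (-(2 * (t - s))) * σ s ^ 2 : ℝ) : EReal))
      atTop := by
  exact stmt5_general (k := fun x => Real.exp (-(2 * x))) zero_le_one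
    ((hσ.pow 2).locallyIntegrableOn measurableSet_Ici) (fun s _ => sq_nonneg (σ s))
    (by fun_prop) (fun _ _ => Real.exp_nonneg _) (fun _ _ => Real.exp_pos _)
    Real.strictMonoOn_log.monotoneOn (hlim.liminf_eq.symm ▸ hL)
end
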